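/- arXiv:2405.03035 — 7 statements merged into one kernel-verified Lean document; each statement's English description precedes it below -/
import Mathlib

section
/- For every nonempty finite sequence u₁, u₂, …, u_m of binary words, the entry in the first row and second column of the matrix product B(u₁)·B(u₂)⋯B(u_m) equals (u_m u_{m−1} ⋯ u₂ u₁)₂ / 2^{|u₁|+|u₂|+⋯+|u_m|}, the binary fraction determined by the concatenation of the words in reverse order. -/
/-!
The map `B` is an anti-homomorphism from binary words to matrices: `B [] = 1` and
`B u * B v = B (v ++ u)`, the latter because `(vu)₂ = (v)₂ 2^|u| + (u)₂`. Hence the product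
`B(u₁)⋯B(u_m)` is `B(u_m⋯u₁)`, whose upper right entry is the claimed binary fraction.
-/

/-- The value `(u)₂` of a binary word, most significant digit first. -/
def val2 (u : List Bool) : ℕ :=
  u.foldl (fun a b => 2 * a + (if b then 1 else 0)) 0

/-- The binary-automaton matrix `B(u)`. -/
def binB (u : List Bool) : Matrix (Fin 2) (Fin 2) ℚ :=
  !![1 - (val2 u : ℚ) / 2 ^ u.length, (val2 u : ℚ) / 2 ^ u.length;
     1 - ((val2 u : ℚ) + 1) / 2 ^ u.length, ((val2 u : ℚ) + 1) / 2 ^ u.length]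

/-- Horner evaluation started from an accumulator `a` shifts `a` left by the word's length. -/
lemma val2_foldl (u : List Bool) (a : ℕ) :
    u.foldl (fun a b => 2 * a + (if b then 1 else 0)) a = a * 2 ^ u.length + val2 u := by
  induction u generalizing a with
  | nil => simp [val2]
  | cons b u ih =>
    simp only [val2, List.foldl_cons, List.length_cons]
    rw [ih, ih (2 * 0 + _)]
    ring

lemma val2_append (v u : List Bool) : val2 (v ++ u) = val2 v * 2 ^ u.length + val2 u := by
  rw [← val2_foldl, val2, List.foldl_append, val2]

lemma binB_nil : binB [] = 1 := by
  ext i j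
  fin_cases i <;> fin_cases j <;> simp [binB, val2]

lemma binB_mul (u v : List Bool) : binB u * binB v = binB (v ++ u) := by
  ext i j
  fin_cases i <;> fin_cases j <;>
    simp [binB, val2_append, Matrix.mul_apply, Fin.sum_univ_two, pow_add] <;> field_simp <;> ring

lemma binB_prod (us : List (List Bool)) :
    (us.map binB).prod = binB us.reverse.flatten := by
  induction us with
  | nil => simp [binB_nil]
  | cons u us ih => simp [ih, binB_mul]

/-- The `(1,2)` entry of `B(u₁)·B(u₂)⋯B(u_m)` is the binary fraction determined by
the concatenation `u_m u_{m-1} ⋯ u₁` of the words in reverse order. -/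
theorem binB_prod_entry (us : List (List Bool)) (hus : us ≠ []) :
    (us.map binB).prod 0 1
      = (val2 us.reverse.flatten : ℚ) / 2 ^ (us.map List.length).sum := by
  rw [binB_prod]
  simp [binB, List.length_flatten]
end

section
/- Let i and j be natural numbers, and set pD = 4^{−i} + 4^{−j} − 4^{−(i+j)} and pS = 2·2^{−(i+j)} − 4^{−(i+j)}. Then: (a) if i = j, then pD·(1−pS) = pS·(1−pD); and (b) if i ≠ j and i ≡ j (mod 12), then pD·(1−pS) ≥ 2^{11}·pS·(1−pD). -/
/-!
Put `x = 2⁻ⁱ` and `y = 2⁻ʲ`. Then `1 - pD = (1 - x²)(1 - y²)` and `1 - pS = (1 - xy)²`, so both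
outcomes are polynomials in `x, y`, and they agree when `x = y`. If `i ≠ j` and `i ≡ j (mod 12)`,
then by symmetry `y = x t` with `t ≤ 2⁻¹²`. After division by `x²`, with `u = x²`, the claim follows
from `2¹² t (1 - tu/2)(1 - u)(1 - t²u) ≤ 1 - u ≤ (1 - tu)² ≤ (1 + t² - t²u)(1 - tu)²`, where the
middle step only needs `2t ≤ 1`; this is `poly_ineq`.
-/

/-- Probability that player `D` has a lucky coin. -/
noncomputable def pD (i j : ℕ) : ℝ := (1/4)^i + (1/4)^j - (1/4)^(i+j)

/-- Probability that player `S` has a lucky coin. -/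
noncomputable def pS (i j : ℕ) : ℝ := 2 * (1/2)^(i+j) - (1/4)^(i+j)

lemma pD_eq (i j : ℕ) : pD i j =
    ((1/2 : ℝ)^i)^2 + ((1/2 : ℝ)^j)^2 - ((1/2 : ℝ)^i)^2 * ((1/2 : ℝ)^j)^2 := by
  have h (n : ℕ) : (1/4 : ℝ)^n = ((1/2)^n)^2 := by
    rw [← pow_mul, mul_comm, pow_mul]; norm_num
  simp only [pD, h, pow_add]; ring

lemma pS_eq (i j : ℕ) : pS i j =
    2 * ((1/2 : ℝ)^i * (1/2 : ℝ)^j) - ((1/2 : ℝ)^i * (1/2 : ℝ)^j)^2 := by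
  have h (n : ℕ) : (1/4 : ℝ)^n = ((1/2)^n)^2 := by
    rw [← pow_mul, mul_comm, pow_mul]; norm_num
  simp only [pS, h, pow_add]

/-- The inequality between the two outcomes, divided by `x²`, with `u = x²` and `y = x t`. -/
lemma poly_ineq (u t : ℝ) (hu0 : 0 ≤ u) (hu1 : u ≤ 1) (ht0 : 0 ≤ t) (ht1 : t ≤ 1/4096) :
    2^11 * (t * (2 - t * u) * ((1 - u) * (1 - t^2 * u))) ≤
      (1 + t^2 - t^2 * u) * (1 - t * u)^2 := by
  have htu0 : 0 ≤ t * u := mul_nonneg ht0 hu0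
  have htu1 : t * u ≤ u / 4096 := by nlinarith
  have htt0 : 0 ≤ t^2 * u := by positivity
  have htt1 : t^2 * u ≤ 1 := by nlinarith
  have hlow : 1 - u ≤ (1 - t * u)^2 := by nlinarith [sq_nonneg (t * u)]
  have ha : (4096 * t) * (1 - t * u / 2) ≤ 1 :=
    mul_le_one₀ (by linarith) (by linarith) (by linarith)
  have hb : (1 - u) * (1 - t^2 * u) ≤ 1 - u :=
    mul_le_of_le_one_right (by linarith) (by linarith)
  have hb0 : 0 ≤ (1 - u) * (1 - t^2 * u) := mul_nonneg (by linarith) (by linarith)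
  have hc : 1 ≤ 1 + t^2 - t^2 * u := by nlinarith [sq_nonneg t]
  calc 2^11 * (t * (2 - t * u) * ((1 - u) * (1 - t^2 * u)))
      = ((4096 * t) * (1 - t * u / 2)) * ((1 - u) * (1 - t^2 * u)) := by ring
    _ ≤ (1 - u) * (1 - t^2 * u) := mul_le_of_le_one_left hb0 ha
    _ ≤ (1 - t * u)^2 := hb.trans hlow
    _ ≤ (1 + t^2 - t^2 * u) * (1 - t * u)^2 := le_mul_of_one_le_left (sq_nonneg _) hc

lemma ineq_add (i d : ℕ) (hd : 12 ≤ d) :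
    2^11 * (pS i (i + d) * (1 - pD i (i + d))) ≤ pD i (i + d) * (1 - pS i (i + d)) := by
  rw [pD_eq, pS_eq, pow_add]
  have hx0 : (0 : ℝ) ≤ (1/2)^i := by positivity
  have hx1 : (1/2 : ℝ)^i ≤ 1 := pow_le_one₀ (by norm_num) (by norm_num)
  have ht0 : (0 : ℝ) ≤ (1/2)^d := by positivity
  have ht1 : (1/2 : ℝ)^d ≤ 1/4096 :=
    (pow_le_pow_of_le_one (by norm_num) (by norm_num) hd).trans (by norm_num)
  generalize (1/2 : ℝ)^i = x at *
  generalize (1/2 : ℝ)^d = t at *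
  have h := mul_le_mul_of_nonneg_left
    (poly_ineq (x^2) t (sq_nonneg x) (pow_le_one₀ hx0 hx1) ht0 ht1) (sq_nonneg x)
  linear_combination h

lemma pD_comm (i j : ℕ) : pD i j = pD j i := by
  rw [pD_eq, pD_eq]; ring

lemma pS_comm (i j : ℕ) : pS i j = pS j i := by
  rw [pS_eq, pS_eq]; ring

/-- Behavior of the Equality Checker: if `i = j` then
`Pr["Different"] = Pr["Same"]`, and if `i ≠ j` with `i ≡ j (mod 12)` then
`Pr["Different"] ≥ 2^11 · Pr["Same"]`, where `Pr["Different"] = pD·(1−pS)` and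
`Pr["Same"] = pS·(1−pD)`. -/
theorem equality_checker (i j : ℕ) :
    (i = j → pD i j * (1 - pS i j) = pS i j * (1 - pD i j)) ∧
    (i ≠ j → i % 12 = j % 12 →
      2^11 * (pS i j * (1 - pD i j)) ≤ pD i j * (1 - pS i j)) := by
  refine ⟨?_, fun hne hmod => ?_⟩
  · rintro rfl
    rw [pD_eq, pS_eq]; ring
  · rcases Nat.lt_or_gt_of_ne hne with h | h
    · obtain ⟨d, rfl⟩ := Nat.exists_eq_add_of_lt h
      exact ineq_add i (d + 1) (by omega)
    · obtain ⟨d, rfl⟩ := Nat.exists_eq_add_of_lt h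
      rw [pD_comm, pS_comm]
      exact ineq_add j (d + 1) (by omega)
end

section
/- For all words v₁, w₁, v₂, w₂ over the digit alphabet {1,2}, the 6×6 integer matrices A satisfy the multiplication law A(v₁,w₁)·A(v₂,w₂) = A(v₁v₂, w₁w₂), where v₁v₂ and w₁w₂ denote concatenation. -/
/-- The base-3 value `(v)₃` of a word over the digit alphabet `{1,2}`
(`false` representing the digit `1`, `true` the digit `2`), most significant
digit first. -/
def val3 (v : List Bool) : ℕ :=
  v.foldl (fun a b => 3 * a + (if b then 2 else 1)) 0

/-- The 6×6 integer matrix `A(v,w)` of Claus. -/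
def matA (v w : List Bool) : Matrix (Fin 6) (Fin 6) ℤ :=
  !![1, -2 * (val3 v : ℤ), 2 * (val3 w : ℤ), (val3 v : ℤ)^2, (val3 w : ℤ)^2,
        -2 * (val3 v : ℤ) * (val3 w : ℤ);
     0, 3^v.length, 0, -(val3 v : ℤ) * 3^v.length, 0, (val3 w : ℤ) * 3^v.length;
     0, 0, 3^w.length, 0, (val3 w : ℤ) * 3^w.length, -(val3 v : ℤ) * 3^w.length;
     0, 0, 0, 3^(2 * v.length), 0, 0;
     0, 0, 0, 0, 3^(2 * w.length), 0;
     0, 0, 0, 0, 0, 3^(v.length + w.length)]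

/-- Concatenation shifts the first numeral: `(v₁v₂)₃ = (v₁)₃ · 3^|v₂| + (v₂)₃`. With this, each entry
of the product law becomes a polynomial identity. -/
theorem val3_append (v₁ v₂ : List Bool) :
    val3 (v₁ ++ v₂) = val3 v₁ * 3 ^ v₂.length + val3 v₂ := by
  induction v₂ using List.reverseRecOn with
  | nil => simp [val3]
  | append_singleton l b ih =>
    have h (u : List Bool) : val3 (u ++ [b]) = 3 * val3 u + (if b then 2 else 1) := by
      simp [val3]
    rw [← List.append_assoc, h, h, ih, List.length_append, List.length_singleton, pow_succ]
    ring

/-- The multiplication law `A(v₁,w₁)·A(v₂,w₂) = A(v₁v₂, w₁w₂)`. -/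
theorem matA_mul (v₁ w₁ v₂ w₂ : List Bool) :
    matA v₁ w₁ * matA v₂ w₂ = matA (v₁ ++ v₂) (w₁ ++ w₂) := by
  ext i j
  fin_cases i <;> fin_cases j <;>
    simp [matA, Matrix.mul_apply, Fin.sum_univ_six, val3_append] <;> ring
end

section
/- For all words v, w over the digit alphabet {1,2}, with e₁ = (1,0,0,0,0,0) and f₁ = (1,0,0,−1,−1,−1), one has e₁ᵀ·A(v,w)·f₁ = 1 − ((v)₃ − (w)₃)²; consequently e₁ᵀ·A(v,w)·f₁ > 0 if and only if v = w. -/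
/-!
The first row of `A(v,w)` paired with `f₁` is the identity `1 - x² - y² + 2xy = 1 - (x - y)²`
at `x = (v)₃`, `y = (w)₃`. An integer of the form `1 - d²` is positive only for `d = 0`, so
positivity means `(v)₃ = (w)₃`. This forces `v = w` because bijective numeration with digits
`1, 2` in base 3 is injective (`val3_injective`): the last digit is the residue mod 3, and it is
never `0`, so the value also tells the empty word from the others.
-/

open Matrix

/-- The starting vector `e₁`. -/
def e₁ : Fin 6 → ℤ := ![1, 0, 0, 0, 0, 0]

/-- The ending vector `f₁`. -/
def f₁ : Fin 6 → ℤ := ![1, 0, 0, -1, -1, -1]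

theorem val3_append_singleton (v : List Bool) (b : Bool) :
    val3 (v ++ [b]) = 3 * val3 v + (if b then 2 else 1) := by
  simp [val3]

theorem val3_injective : Function.Injective val3 := by
  intro v
  -- Reverse induction strips the least significant digit, which is the residue mod 3.
  induction v using List.reverseRecOn with
  | nil =>
    intro w h
    rcases List.eq_nil_or_concat w with rfl | ⟨w', c, rfl⟩
    · rfl
    · rw [List.concat_eq_append, val3_append_singleton] at h
      cases c <;> simp [val3] at h
  | append_singleton v b ih =>
    intro w h
    rcases List.eq_nil_or_concat w with rfl | ⟨w', c, rfl⟩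
    · rw [val3_append_singleton] at h
      cases b <;> simp [val3] at h
    · rw [List.concat_eq_append] at h ⊢
      rw [val3_append_singleton, val3_append_singleton] at h
      have hbc : b = c := by cases b <;> cases c <;> simp at h ⊢ <;> omega
      subst hbc
      rw [ih (by omega : val3 v = val3 w')]

theorem e₁_dotProduct_matA_mulVec_f₁ (v w : List Bool) :
    e₁ ⬝ᵥ (matA v w *ᵥ f₁) = 1 - ((val3 v : ℤ) - (val3 w : ℤ))^2 := by
  simp [e₁, f₁, matA, dotProduct, mulVec, Fin.sum_univ_succ]
  ring

/-- `e₁ᵀ·A(v,w)·f₁ = 1 − ((v)₃ − (w)₃)²`, and this is positive iff `v = w`. -/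
theorem matA_equality_test (v w : List Bool) :
    e₁ ⬝ᵥ (matA v w *ᵥ f₁) = 1 - ((val3 v : ℤ) - (val3 w : ℤ))^2 ∧
    (0 < e₁ ⬝ᵥ (matA v w *ᵥ f₁) ↔ v = w) := by
  refine ⟨e₁_dotProduct_matA_mulVec_f₁ v w, ?_⟩
  rw [e₁_dotProduct_matA_mulVec_f₁]
  constructor
  · intro h
    apply val3_injective
    have hd : ((val3 v : ℤ) - (val3 w : ℤ)) ^ 2 < 1 := by linarith
    have habs := (sq_lt_one_iff_abs_lt_one _).mp hd
    have hzero := Int.abs_lt_one_iff.mp habs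
    omega
  · rintro rfl
    simp
end

section
/- Let k > 2, let M₁, …, M_k be d×d real matrices, and let τ encode the alphabet {1,…,k} over {a,b} by the prefix-free code τ(i) = a^{i−1}b for 1 ≤ i ≤ k−1 and τ(k) = a^{k−1}, extended to words by concatenation. Define the (k−1)d×(k−1)d block matrices M'_a (block (i, i+1) equal to the d×d identity for 0 ≤ i ≤ k−3, block (k−2, 0) equal to M_k, all other blocks zero) and M'_b (block (i, 0) equal to M_{i+1} for 0 ≤ i ≤ k−2, all other blocks zero). For vectors π, η of length d, let π' and η' be the vectors of length (k−1)d that carry π respectively η in block 0 and zeros elsewhere. Then: (a) for every word u over {1,…,k}, π'ᵀ·(∏_{c ∈ τ(u)} M'_c)·η' = πᵀ·(∏_{σ ∈ u} M_σ)·η, where both products are taken in the order in which the letters are read; and (b) for every word x over {a,b} that is not of the form τ(u) for any word u, π'ᵀ·(∏_{c ∈ x} M'_c)·η' = 0. -/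
/-!
The row vector `π'ᵀ · ∏ M'_c` is tracked while the word is read. It always has the form
`blockVec k d j v`, supported on the single block `j`, where `j` counts the letters `a` read in the
current unfinished codeword and `v` is `π` multiplied by the matrices of the decoded letters.
Reading `b` completes the codeword `a^j b`, reading `a` in block `k - 2` completes `a^(k-1)`, and
reading `a` elsewhere only increments `j` (`blockVec_vecMul_true`, `blockVec_vecMul_false_last`,
`blockVec_vecMul_false_lt`).

Hence a whole codeword `τ(i)` acts on block `0` as `M i` (`blockVec_vecMul_tauCode`), which gives
(a) by induction on `u`. For (b), `code_or_zero` generalizes the claim to an arbitrary starting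
block `j`: either `a^j x` is a concatenation of codewords, or the final vector lies outside block `0` and
is orthogonal to `η'`.
-/

open Matrix

/-- The prefix-free code `τ` on the alphabet `{1,…,k}` (represented by `Fin k`,
with `i : Fin k` standing for the letter `i+1`): `τ(i) = a^{i-1}b` for
`1 ≤ i ≤ k-1` and `τ(k) = a^{k-1}`, where `a = false` and `b = true`. -/
def tauCode (k : ℕ) (i : Fin k) : List Bool :=
  if i.val = k - 1 then List.replicate (k - 1) false
  else List.replicate i.val false ++ [true]

/-- `τ` extended to words by concatenation. -/
def tauWord (k : ℕ) (u : List (Fin k)) : List Bool := (u.map (tauCode k)).flatten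

/-- The block matrix `M'_a`: block `(i, i+1)` is the identity for `0 ≤ i ≤ k-3`,
block `(k-2, 0)` is `M_k`, all other blocks are zero. -/
def Mblock_a (k d : ℕ) (hk : 2 < k) (M : Fin k → Matrix (Fin d) (Fin d) ℝ) :
    Matrix (Fin (k - 1) × Fin d) (Fin (k - 1) × Fin d) ℝ :=
  Matrix.of fun x y =>
    if x.1.val = k - 2 then
      (if y.1.val = 0 then M ⟨k - 1, by omega⟩ x.2 y.2 else 0)
    else
      (if y.1.val = x.1.val + 1 ∧ x.2 = y.2 then 1 else 0)

/-- The block matrix `M'_b`: block `(i, 0)` is `M_{i+1}` for `0 ≤ i ≤ k-2`,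
all other blocks are zero. -/
def Mblock_b (k d : ℕ) (M : Fin k → Matrix (Fin d) (Fin d) ℝ) :
    Matrix (Fin (k - 1) × Fin d) (Fin (k - 1) × Fin d) ℝ :=
  Matrix.of fun x y =>
    if y.1.val = 0 then M (Fin.castLE (Nat.sub_le k 1) x.1) x.2 y.2 else 0

/-- The transition matrix of the binary automaton for the letter `c ∈ {a,b}`. -/
def Mblock (k d : ℕ) (hk : 2 < k) (M : Fin k → Matrix (Fin d) (Fin d) ℝ)
    (c : Bool) : Matrix (Fin (k - 1) × Fin d) (Fin (k - 1) × Fin d) ℝ :=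
  if c then Mblock_b k d M else Mblock_a k d hk M

/-- A vector of length `d` placed in block `0` of the `(k-1)·d`-dimensional space,
with zeros elsewhere. -/
def liftVec (k d : ℕ) (v : Fin d → ℝ) : Fin (k - 1) × Fin d → ℝ :=
  fun x => if x.1.val = 0 then v x.2 else 0

/-- The vector of length `(k-1)·d` carrying `v` in block `j` and zeros elsewhere. The index `j` is a
natural number; the vector is zero if `j ≥ k - 1`. -/
def blockVec (k d : ℕ) (j : ℕ) (v : Fin d → ℝ) : Fin (k - 1) × Fin d → ℝ :=
  fun x => if x.1.val = j then v x.2 else 0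

theorem blockVec_vecMul_apply {k d j : ℕ} (hj : j < k - 1) (v : Fin d → ℝ)
    (A : Matrix (Fin (k - 1) × Fin d) (Fin (k - 1) × Fin d) ℝ) (y : Fin (k - 1) × Fin d) :
    (blockVec k d j v ᵥ* A) y = ∑ s, v s * A (⟨j, hj⟩, s) y := by
  simp only [vecMul, dotProduct, blockVec, Fintype.sum_prod_type]
  rw [Finset.sum_eq_single (⟨j, hj⟩ : Fin (k - 1))]
  · simp
  · intro b _ hb
    have : b.val ≠ j := fun h => hb (Fin.ext h)
    simp [this]
  · simp

theorem blockVec_vecMul_true {k d j : ℕ} (hk : 2 < k) (M : Fin k → Matrix (Fin d) (Fin d) ℝ)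
    (hj : j < k - 1) (v : Fin d → ℝ) :
    blockVec k d j v ᵥ* Mblock k d hk M true
      = blockVec k d 0 (v ᵥ* M ⟨j, by omega⟩) := by
  funext y
  rw [blockVec_vecMul_apply hj]
  by_cases h : y.1.val = 0 <;>
    simp [Mblock, Mblock_b, blockVec, h, vecMul, dotProduct, Fin.castLE]

theorem blockVec_vecMul_false_last {k d : ℕ} (hk : 2 < k)
    (M : Fin k → Matrix (Fin d) (Fin d) ℝ) (v : Fin d → ℝ) :
    blockVec k d (k - 2) v ᵥ* Mblock k d hk M false
      = blockVec k d 0 (v ᵥ* M ⟨k - 1, by omega⟩) := by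
  funext y
  rw [blockVec_vecMul_apply (by omega)]
  by_cases h : y.1.val = 0 <;>
    simp [Mblock, Mblock_a, blockVec, h, vecMul, dotProduct]

theorem blockVec_vecMul_false_lt {k d j : ℕ} (hk : 2 < k)
    (M : Fin k → Matrix (Fin d) (Fin d) ℝ) (hj : j < k - 2) (v : Fin d → ℝ) :
    blockVec k d j v ᵥ* Mblock k d hk M false = blockVec k d (j + 1) v := by
  funext y
  rw [blockVec_vecMul_apply (by omega)]
  have hne : j ≠ k - 2 := by omega
  by_cases h : y.1.val = j + 1 <;>
    simp [Mblock, Mblock_a, blockVec, h, hne]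

theorem blockVec_vecMul_replicate {k d : ℕ} (hk : 2 < k)
    (M : Fin k → Matrix (Fin d) (Fin d) ℝ) (v : Fin d → ℝ) (n : ℕ) (hn : n ≤ k - 2) :
    blockVec k d 0 v ᵥ* ((List.replicate n false).map (Mblock k d hk M)).prod
      = blockVec k d n v := by
  induction n with
  | zero => simp
  | succ n ih =>
    rw [List.replicate_succ', List.map_append, List.prod_append, ← vecMul_vecMul,
      ih (by omega)]
    simpa using blockVec_vecMul_false_lt hk M (by omega) v

theorem blockVec_vecMul_tauCode {k d : ℕ} (hk : 2 < k)
    (M : Fin k → Matrix (Fin d) (Fin d) ℝ) (v : Fin d → ℝ) (i : Fin k) :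
    blockVec k d 0 v ᵥ* ((tauCode k i).map (Mblock k d hk M)).prod
      = blockVec k d 0 (v ᵥ* M i) := by
  unfold tauCode
  split_ifs with h
  · have hrep : List.replicate (k - 1) false = List.replicate (k - 2) false ++ [false] := by
      rw [← List.replicate_succ']
      congr 1
      omega
    have hi : i = ⟨k - 1, by omega⟩ := Fin.ext h
    rw [hrep, List.map_append, List.prod_append, ← vecMul_vecMul,
      blockVec_vecMul_replicate hk M v _ le_rfl, hi]
    simpa using blockVec_vecMul_false_last hk M v
  · rw [List.map_append, List.prod_append, ← vecMul_vecMul,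
      blockVec_vecMul_replicate hk M v _ (by omega)]
    simpa using blockVec_vecMul_true hk M (j := i.val) (by omega) v

theorem blockVec_vecMul_tauWord {k d : ℕ} (hk : 2 < k)
    (M : Fin k → Matrix (Fin d) (Fin d) ℝ) (u : List (Fin k)) (v : Fin d → ℝ) :
    blockVec k d 0 v ᵥ* ((tauWord k u).map (Mblock k d hk M)).prod
      = blockVec k d 0 (v ᵥ* (u.map M).prod) := by
  induction u generalizing v with
  | nil => simp [tauWord]
  | cons i u ih =>
    have hcons : tauWord k (i :: u) = tauCode k i ++ tauWord k u := by simp [tauWord]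
    rw [hcons, List.map_append, List.prod_append, ← vecMul_vecMul,
      blockVec_vecMul_tauCode, ih, List.map_cons, List.prod_cons, vecMul_vecMul]

theorem blockVec_dotProduct_liftVec {k d j : ℕ} (hj : j < k - 1) (v η : Fin d → ℝ) :
    blockVec k d j v ⬝ᵥ liftVec k d η = if j = 0 then v ⬝ᵥ η else 0 := by
  simp only [dotProduct, blockVec, liftVec, Fintype.sum_prod_type]
  rw [Finset.sum_eq_single (⟨j, hj⟩ : Fin (k - 1))]
  · by_cases h : j = 0 <;> simp [h]
  · intro b _ hb
    have : b.val ≠ j := fun h => hb (Fin.ext h)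
    simp [this]
  · simp

/-- Started in block `j`, that is, after `j` letters `a` of an unfinished codeword, the automaton
gives a nonzero value only on words `x` that complete `a^j` to a concatenation of codewords. -/
theorem code_or_zero {k d : ℕ} (hk : 2 < k) (M : Fin k → Matrix (Fin d) (Fin d) ℝ)
    (η : Fin d → ℝ) (x : List Bool) (j : ℕ) (hj : j < k - 1) (v : Fin d → ℝ) :
    (∃ u, List.replicate j false ++ x = tauWord k u) ∨
      (blockVec k d j v ᵥ* (x.map (Mblock k d hk M)).prod) ⬝ᵥ liftVec k d η = 0 := by
  induction x generalizing j v with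
  | nil =>
    by_cases h : j = 0
    · exact Or.inl ⟨[], by simp [h, tauWord]⟩
    · right
      simp [blockVec_dotProduct_liftVec hj, h]
  | cons c x ih =>
    rw [List.map_cons, List.prod_cons, ← vecMul_vecMul]
    cases c with
    | true =>
      rw [blockVec_vecMul_true hk M hj]
      refine (ih 0 (by omega) _).imp_left ?_
      rintro ⟨u, hu⟩
      refine ⟨⟨j, by omega⟩ :: u, ?_⟩
      have hne : j ≠ k - 1 := by omega
      simp only [List.replicate_zero, List.nil_append] at hu
      simp [hu, tauWord, tauCode, hne]
    | false =>
      have hrep : List.replicate j false ++ false :: x = List.replicate (j + 1) false ++ x := by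
        simp [List.replicate_succ']
      rw [hrep]
      by_cases h : j = k - 2
      · subst h
        rw [blockVec_vecMul_false_last hk M]
        refine (ih 0 (by omega) _).imp_left ?_
        rintro ⟨u, hu⟩
        refine ⟨⟨k - 1, by omega⟩ :: u, ?_⟩
        have hk1 : k - 2 + 1 = k - 1 := by omega
        simp only [List.replicate_zero, List.nil_append] at hu
        simp [hu, tauWord, tauCode, hk1]
      · rw [blockVec_vecMul_false_lt hk M (by omega)]
        exact ih (j + 1) (by omega) v

/-- Reduction of a `k`-letter alphabet (`k > 2`) to the binary alphabet `{a,b}`: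
(a) for every word `u` over `{1,…,k}`,
`π'ᵀ·(∏_{c ∈ τ(u)} M'_c)·η' = πᵀ·(∏_{σ ∈ u} M_σ)·η`, both products taken in
reading order; and (b) every word `x` over `{a,b}` that is not of the form `τ(u)`
yields `π'ᵀ·(∏_{c ∈ x} M'_c)·η' = 0`. -/
theorem binary_coding (k d : ℕ) (hk : 2 < k)
    (M : Fin k → Matrix (Fin d) (Fin d) ℝ) (π η : Fin d → ℝ) :
    (∀ u : List (Fin k),
      liftVec k d π ⬝ᵥ
          (((tauWord k u).map (Mblock k d hk M)).prod *ᵥ liftVec k d η)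
        = π ⬝ᵥ ((u.map M).prod *ᵥ η)) ∧
    (∀ x : List Bool, (∀ u : List (Fin k), x ≠ tauWord k u) →
      liftVec k d π ⬝ᵥ ((x.map (Mblock k d hk M)).prod *ᵥ liftVec k d η) = 0) := by
  have hlift : liftVec k d π = blockVec k d 0 π := rfl
  refine ⟨fun u => ?_, fun x hx => ?_⟩
  · rw [dotProduct_mulVec, hlift, blockVec_vecMul_tauWord,
      blockVec_dotProduct_liftVec (by omega), if_pos rfl, dotProduct_mulVec]
  · rw [dotProduct_mulVec, hlift]
    refine (code_or_zero hk M η x 0 (by omega) π).resolve_left ?_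
    rintro ⟨u, hu⟩
    exact hx u (by simpa using hu)
end

section
/- For every real number x with 0 ≤ x ≤ 1 and x ≠ 1/2, the sequence (1 − (1/2)·xⁿ − (1/2)·(1−x)ⁿ)^{2ⁿ} converges to 0 as n → ∞. -/
open Filter

/-! With `y = max x (1 - x) > 1/2`, each round is undecided with probability at most
`1 - yⁿ/2 ≤ exp (-yⁿ/2)`, so `2ⁿ` rounds are undecided with probability at most
`exp (-(2y)ⁿ/2)`, which tends to `0` because `2y > 1`. The expression is symmetric under
`x ↦ 1 - x`, so it suffices to treat `x > 1/2`. -/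

theorem indecision_tendsto_zero_of_half_lt (x : ℝ) (h1 : x ≤ 1) (hx : 1 / 2 < x) :
    Tendsto (fun n : ℕ => (1 - (1/2) * x^n - (1/2) * (1 - x)^n) ^ (2^n))
      atTop (nhds 0) := by
  have h0 : 0 ≤ x := by linarith
  have hy : 0 ≤ 1 - x := by linarith
  have base_nonneg : ∀ n : ℕ, 0 ≤ 1 - (1/2) * x^n - (1/2) * (1 - x)^n := fun n => by
    have := pow_le_one₀ (n := n) h0 h1
    have := pow_le_one₀ (n := n) hy (by linarith)
    linarith
  have hlim : Tendsto (fun n : ℕ => Real.exp (-((1/2) * (2 * x)^n))) atTop (nhds 0) :=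
    Real.tendsto_exp_neg_atTop_nhds_zero.comp
      ((tendsto_pow_atTop_atTop_of_one_lt (by linarith)).const_mul_atTop (by norm_num))
  refine squeeze_zero (fun n => pow_nonneg (base_nonneg n) _) (fun n => ?_) hlim
  have hbase : 1 - (1/2) * x^n - (1/2) * (1 - x)^n ≤ Real.exp (-((1/2) * x^n)) := by
    have := Real.add_one_le_exp (-((1/2) * x^n))
    have := pow_nonneg hy n
    linarith
  calc (1 - (1/2) * x^n - (1/2) * (1 - x)^n) ^ (2^n)
      ≤ Real.exp (-((1/2) * x^n)) ^ (2^n) := pow_le_pow_left₀ (base_nonneg n) hbase _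
    _ = Real.exp (-((1/2) * (2 * x)^n)) := by
      rw [← Real.exp_nat_mul, mul_pow]
      push_cast
      ring_nf

/-- For `0 ≤ x ≤ 1` with `x ≠ 1/2`, the probability
`(1 − ½·xⁿ − ½·(1−x)ⁿ)^{2ⁿ}` of continued indecision over `2ⁿ` rounds tends
to `0` as `n → ∞`. -/
theorem indecision_tendsto_zero (x : ℝ) (h0 : 0 ≤ x) (h1 : x ≤ 1)
    (hx : x ≠ 1 / 2) :
    Tendsto (fun n : ℕ => (1 - (1/2) * x^n - (1/2) * (1 - x)^n) ^ (2^n))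
      atTop (nhds 0) := by
  rcases lt_or_gt_of_ne hx with h | h
  · refine (indecision_tendsto_zero_of_half_lt (1 - x) (by linarith) (by linarith)).congr
      fun n => ?_
    rw [sub_sub_cancel, sub_right_comm]
  · exact indecision_tendsto_zero_of_half_lt x h1 h
end

section
/- For every real number x with 1/2 < x ≤ 1 and every real ε with 0 < ε < 1, there exist positive integers n and t such that 1 − (1 − (1−x)ⁿ)ᵗ ≤ ε and (1 − xⁿ)ᵗ ≤ ε. -/
/-!
Write `p = xⁿ` and `q = (1 - x)ⁿ`. By Bernoulli's inequality the first rejection probability is at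
most `t * q`, and the second is at most `1 / (1 + t * p)`. Taking `t = ⌈1 / (ε * p)⌉` makes the
second at most `ε`. Since `t ≤ 2 / (ε * p)`, the first is then at most `(2 / ε) * ((1 - x) / x)ⁿ`,
which is at most `ε` for large `n` because `(1 - x) / x < 1` when `x > 1/2`.
-/

/-- Probability amplification (Gimbert–Oualhadj): for `1/2 < x ≤ 1` and
`0 < ε < 1` there are positive integers `n` (repetitions per round) and `t`
(rounds) such that both rejection probabilities,
`1 − (1 − (1−x)ⁿ)ᵗ` in the `(−)` branch and `(1 − xⁿ)ᵗ` in the `(+)` branch,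
are at most `ε`. -/
theorem amplification (x ε : ℝ) (hx : 1/2 < x) (hx1 : x ≤ 1)
    (hε0 : 0 < ε) (hε1 : ε < 1) :
    ∃ n t : ℕ, 0 < n ∧ 0 < t ∧
      1 - (1 - (1 - x)^n)^t ≤ ε ∧ (1 - x^n)^t ≤ ε := by
  have hx0 : 0 < x := by linarith
  have hr : (1 - x) / x < 1 := by
    rw [div_lt_one hx0]
    linarith
  obtain ⟨n, hn⟩ := exists_pow_lt_of_lt_one (show 0 < ε ^ 2 / 2 by positivity) hr
  have hn0 : 0 < n := by
    rcases Nat.eq_zero_or_pos n with rfl | h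
    · rw [pow_zero] at hn
      nlinarith
    · exact h
  have hp : 0 < x ^ n := by positivity
  have hp1 : x ^ n ≤ 1 := pow_le_one₀ hx0.le hx1
  have hq : 0 ≤ (1 - x) ^ n := pow_nonneg (by linarith) n
  have hq1 : (1 - x) ^ n ≤ 1 := pow_le_one₀ (by linarith) (by linarith)
  rw [div_pow, div_lt_iff₀ hp] at hn
  refine ⟨n, ?_⟩
  generalize x ^ n = p at *
  generalize (1 - x) ^ n = q at *
  have hεp : 0 < ε * p := by positivity
  have ht_lower : 1 ≤ (⌈1 / (ε * p)⌉₊ : ℝ) * (ε * p) :=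
    (div_le_iff₀ hεp).1 (Nat.le_ceil _)
  have ht_upper : (⌈1 / (ε * p)⌉₊ : ℝ) * (ε * p) ≤ 2 := by
    have h := (Nat.ceil_lt_add_one (show 0 ≤ 1 / (ε * p) by positivity)).le
    have h' := mul_le_mul_of_nonneg_right h hεp.le
    rw [add_mul, div_mul_cancel₀ _ hεp.ne'] at h'
    nlinarith
  refine ⟨⌈1 / (ε * p)⌉₊, hn0, Nat.ceil_pos.2 (by positivity), ?_, ?_⟩
  · generalize ⌈1 / (ε * p)⌉₊ = t at *
    have hb := one_add_mul_le_pow (show (-2 : ℝ) ≤ -q by linarith) t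
    rw [← sub_eq_add_neg 1 q] at hb
    have htq : (t : ℝ) * q ≤ ε := by
      refine le_of_mul_le_mul_right ?_ hεp
      calc (t : ℝ) * q * (ε * p) = (t * (ε * p)) * q := by ring
        _ ≤ 2 * q := by gcongr
        _ ≤ ε * (ε * p) := by linarith
    linarith
  · generalize ⌈1 / (ε * p)⌉₊ = t at *
    have hb := one_add_mul_le_pow (show (-2 : ℝ) ≤ p by linarith) t
    have h0 : 0 ≤ (1 - p) ^ t := pow_nonneg (by linarith) t
    -- `(1 - p)ᵗ (1 + p)ᵗ = (1 - p²)ᵗ ≤ 1` turns Bernoulli's lower bound on `(1 + p)ᵗ`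
    -- into an upper bound on `(1 - p)ᵗ`.
    have hprod : (1 - p) ^ t * (1 + p) ^ t ≤ 1 := by
      rw [← mul_pow]
      exact pow_le_one₀ (by nlinarith) (by nlinarith)
    have htp : (1 - p) ^ t * (t * p) ≤ 1 :=
      (mul_le_mul_of_nonneg_left (by linarith) h0).trans hprod
    calc (1 - p) ^ t = (1 - p) ^ t * 1 := (mul_one _).symm
      _ ≤ (1 - p) ^ t * (t * (ε * p)) := by gcongr
      _ = ε * ((1 - p) ^ t * (t * p)) := by ring
      _ ≤ ε * 1 := by gcongr
      _ = ε := mul_one _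
end
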